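/- Any spi-logic axiomatised by sp-implications of the form ◇_{R₁}⋯◇_{Rₙ} p → ◇_{S₁}⋯◇_{Sₘ} p (n ≥ 0, m > 0, R₁,…,Rₙ,S₁,…,Sₘ ∈ 𝓡, p a propositional variable) is complex, and hence complete. In particular, the spi-logic axiomatised by {◇p → ◇◇p} (density) and the spi-logic axiomatised by {◇_R◇_S p → ◇_S◇_R p, ◇_S◇_R p → ◇_R◇_S p} (commutativity) are complex and complete. -/

import Mathlib

/-- Strictly positive modal formulas over a signature `Sig`:
propositional variables, `⊤`, conjunction, and a diamond `◇_r` for each `r : Sig`. -/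
inductive SP (Sig : Type) : Type
  | var : ℕ → SP Sig
  | top : SP Sig
  | and : SP Sig → SP Sig → SP Sig
  | dia : Sig → SP Sig → SP Sig

/-- An sp-implication `σ → τ` is a pair of sp-formulas. -/
abbrev SPImp (Sig : Type) := SP Sig × SP Sig

/-- A SLO of signature `Sig`: a meet-semilattice with a greatest element,
equipped with a monotone unary operator for each element of the signature. -/
structure SLO (Sig : Type) where
  carrier : Type
  [instInf : SemilatticeInf carrier]
  [instTop : OrderTop carrier]
  dia : Sig → carrier → carrier
  mono : ∀ r : Sig, Monotone (dia r)

attribute [instance] SLO.instInf SLO.instTop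

namespace SLO

variable {Sig : Type}

/-- Evaluation of an sp-formula in a SLO under a valuation of the variables. -/
def eval (A : SLO Sig) (v : ℕ → A.carrier) : SP Sig → A.carrier
  | .var n => v n
  | .top => ⊤
  | .and φ ψ => eval A v φ ⊓ eval A v ψ
  | .dia r φ => A.dia r (eval A v φ)

/-- A SLO validates an sp-implication `σ → τ` if under every valuation
the value of `σ` is below the value of `τ`. -/
def Valid (A : SLO Sig) (ι : SPImp Sig) : Prop :=
  ∀ v : ℕ → A.carrier, eval A v ι.1 ≤ eval A v ι.2

/-- A SLO validates a set of sp-implications. -/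
def ValidSet (A : SLO Sig) (Ax : Set (SPImp Sig)) : Prop :=
  ∀ ι ∈ Ax, Valid A ι

end SLO

/-- A Kripke frame: a nonempty type of worlds with a binary accessibility
relation for each element of the signature. -/
structure KFrame (Sig : Type) where
  world : Type
  [instNonempty : Nonempty world]
  rel : Sig → world → world → Prop

attribute [instance] KFrame.instNonempty

namespace KFrame

variable {Sig : Type}

/-- Truth of an sp-formula at a world of a Kripke model `(F, v)`. -/
def truth (F : KFrame Sig) (v : ℕ → Set F.world) : SP Sig → F.world → Prop
  | .var n, w => w ∈ v n
  | .top, _ => True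
  | .and φ ψ, w => truth F v φ w ∧ truth F v ψ w
  | .dia r φ, w => ∃ u, F.rel r w u ∧ truth F v φ u

/-- A frame validates an sp-implication `σ → τ` if in every Kripke model on it,
at every world, truth of `σ` implies truth of `τ`. -/
def Valid (F : KFrame Sig) (ι : SPImp Sig) : Prop :=
  ∀ (v : ℕ → Set F.world) (w : F.world), truth F v ι.1 w → truth F v ι.2 w

/-- A frame validates a set of sp-implications. -/
def ValidSet (F : KFrame Sig) (Ax : Set (SPImp Sig)) : Prop :=
  ∀ ι ∈ Ax, Valid F ι

/-- The complex algebra `F*` of a frame, as a SLO: all subsets of the worlds,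
with intersection as meet, the whole set as `⊤`, and
`◇_r X = {w | ∃ u ∈ X, rel r w u}`. -/
def cmpl (F : KFrame Sig) : SLO Sig where
  carrier := Set F.world
  dia r X := {w | ∃ u ∈ X, F.rel r w u}
  mono r := by
    intro X Y hXY w hw
    obtain ⟨u, hu, hr⟩ := hw
    exact ⟨u, hXY hu, hr⟩

end KFrame

/-- An sp-embedding between SLOs: an injective map preserving `⊤`,
binary meets, and each operator. -/
def IsSpEmbedding {Sig : Type} (A B : SLO Sig) (η : A.carrier → B.carrier) : Prop :=
  Function.Injective η ∧ η ⊤ = ⊤ ∧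
    (∀ a b : A.carrier, η (a ⊓ b) = η a ⊓ η b) ∧
    ∀ (r : Sig) (a : A.carrier), η (A.dia r a) = B.dia r (η a)

/-- `Ax ⊨_Kr ι`: every frame validating every member of `Ax` validates `ι`. -/
def KrCons {Sig : Type} (Ax : Set (SPImp Sig)) (ι : SPImp Sig) : Prop :=
  ∀ F : KFrame Sig, F.ValidSet Ax → F.Valid ι

/-- `Ax ⊨_SLO ι`: every SLO validating every member of `Ax` validates `ι`. -/
def SLOCons {Sig : Type} (Ax : Set (SPImp Sig)) (ι : SPImp Sig) : Prop :=
  ∀ A : SLO Sig, A.ValidSet Ax → A.Valid ι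

/-- The spi-logic axiomatised by `Ax` is complete:
`Ax ⊨_Kr ι` iff `Ax ⊨_SLO ι` for every sp-implication `ι`. -/
def IsCompleteLogic {Sig : Type} (Ax : Set (SPImp Sig)) : Prop :=
  ∀ ι : SPImp Sig, KrCons Ax ι ↔ SLOCons Ax ι

/-- The spi-logic axiomatised by `Ax` is complex: every SLO validating every
member of `Ax` sp-embeds into the complex algebra of some frame validating
every member of `Ax`. -/
def IsComplexLogic {Sig : Type} (Ax : Set (SPImp Sig)) : Prop :=
  ∀ A : SLO Sig, A.ValidSet Ax →
    ∃ F : KFrame Sig, F.ValidSet Ax ∧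
      ∃ η : A.carrier → (KFrame.cmpl F).carrier, IsSpEmbedding A (KFrame.cmpl F) η

/-- The unimodal diamond. -/
def SP.d (φ : SP Unit) : SP Unit := SP.dia () φ

/-- `p → ◇p` (reflexivity). -/
def e_refl : SPImp Unit := (SP.var 0, (SP.var 0).d)

/-- `◇◇p → ◇p` (transitivity). -/
def e_trans : SPImp Unit := (((SP.var 0).d).d, (SP.var 0).d)

/-- `q ∧ ◇p → ◇(p ∧ ◇q)` (symmetry). -/
def e_sym : SPImp Unit :=
  ((SP.var 1).and ((SP.var 0).d), ((SP.var 0).and ((SP.var 1).d)).d)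

/-- `diaList [R₁, …, Rₙ] φ = ◇_{R₁} ⋯ ◇_{Rₙ} φ`. -/
def diaList {Sig : Type} : List Sig → SP Sig → SP Sig
  | [], φ => φ
  | r :: L, φ => SP.dia r (diaList L φ)

/-- `◇p → ◇◇p` (density). -/
def e_dense : SPImp Unit := ((SP.var 0).d, ((SP.var 0).d).d)

/-- Commutativity axioms `◇_R◇_S p → ◇_S◇_R p` and `◇_S◇_R p → ◇_R◇_S p` for a
bimodal signature with the two distinct operators indexed by `Bool`. -/
def commAx : Set (SPImp Bool) :=
  {(SP.dia true (SP.dia false (SP.var 0)), SP.dia false (SP.dia true (SP.var 0))),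
   (SP.dia false (SP.dia true (SP.var 0)), SP.dia true (SP.dia false (SP.var 0)))}

theorem cmpl_eval_iff {Sig : Type} (F : KFrame Sig) (v : ℕ → Set F.world) (φ : SP Sig) :
    ∀ w : F.world, w ∈ (show Set F.world from F.cmpl.eval v φ) ↔ F.truth v φ w := by
  induction φ with
  | var n => intro w; exact Iff.rfl
  | top => intro w; exact Iff.rfl
  | and φ ψ h1 h2 => intro w; exact and_congr (h1 w) (h2 w)
  | dia r φ h =>
    intro w
    constructor
    · rintro ⟨u, hu, hr⟩
      exact ⟨u, hr, (h u).1 hu⟩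
    · rintro ⟨u, hr, hu⟩
      exact ⟨u, (h u).2 hu, hr⟩

theorem cmpl_valid_iff {Sig : Type} (F : KFrame Sig) (ι : SPImp Sig) :
    F.cmpl.Valid ι ↔ F.Valid ι := by
  constructor
  · intro h v w hw
    exact (cmpl_eval_iff F v _ w).1 (h v ((cmpl_eval_iff F v _ w).2 hw))
  · intro h v w hw
    exact (cmpl_eval_iff F v _ w).2 (h v w ((cmpl_eval_iff F v _ w).1 hw))

theorem emb_eval {Sig : Type} {A B : SLO Sig} {η : A.carrier → B.carrier}
    (h : IsSpEmbedding A B η) (v : ℕ → A.carrier) (φ : SP Sig) :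
    η (A.eval v φ) = B.eval (fun n => η (v n)) φ := by
  obtain ⟨_, ht, hi, hd⟩ := h
  induction φ with
  | var n => rfl
  | top => exact ht
  | and φ ψ h1 h2 => simp only [SLO.eval, hi, h1, h2]
  | dia r φ h1 => simp only [SLO.eval, hd, h1]

theorem complete_of_complex {Sig : Type} {Ax : Set (SPImp Sig)} (h : IsComplexLogic Ax) :
    IsCompleteLogic Ax := by
  intro ι
  constructor
  · intro hk A hA v
    obtain ⟨F, hF, η, hη⟩ := h A hA
    have h1 := (cmpl_valid_iff F ι).2 (hk F hF) (fun n => η (v n))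
    rw [← emb_eval hη, ← emb_eval hη, ← inf_eq_left, ← hη.2.2.1] at h1
    exact inf_eq_left.1 (hη.1 h1)
  · intro hs F hF
    exact (cmpl_valid_iff F ι).1 (hs F.cmpl fun κ hκ => (cmpl_valid_iff F κ).2 (hF κ hκ))

/-- Filters of a SLO. -/
structure SFil {Sig : Type} (A : SLO Sig) where
  s : Set A.carrier
  top : ⊤ ∈ s
  up : ∀ a b, a ∈ s → a ≤ b → b ∈ s
  inf : ∀ a b, a ∈ s → b ∈ s → a ⊓ b ∈ s

/-- Principal filter. -/
def SFil.pr {Sig : Type} (A : SLO Sig) (a : A.carrier) : SFil A where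
  s := {b | a ≤ b}
  top := le_top (a := a)
  up _ _ h1 h2 := le_trans h1 h2
  inf _ _ h1 h2 := le_inf h1 h2

/-- Filter generated by the diamonds of members. -/
def SFil.img {Sig : Type} {A : SLO Sig} (G : SFil A) (r : Sig) : SFil A where
  s := {b | ∃ a ∈ G.s, A.dia r a ≤ b}
  top := ⟨⊤, G.top, le_top⟩
  up := fun _ _ ⟨a, h, h1⟩ h2 => ⟨a, h, h1.trans h2⟩
  inf := fun _ _ ⟨a, h, h1⟩ ⟨b, h', h2⟩ =>
    ⟨a ⊓ b, G.inf _ _ h h', le_inf ((A.mono r inf_le_left).trans h1)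
      ((A.mono r inf_le_right).trans h2)⟩

/-- The filter frame. -/
def filFrame {Sig : Type} (A : SLO Sig) : KFrame Sig where
  world := SFil A
  instNonempty := ⟨SFil.pr A ⊤⟩
  rel r F G := ∀ a ∈ G.s, A.dia r a ∈ F.s

/-- Iterated diamonds in a SLO. -/
def dl {Sig : Type} (A : SLO Sig) : List Sig → A.carrier → A.carrier
  | [], a => a
  | r :: L, a => A.dia r (dl A L a)

theorem eval_diaList {Sig : Type} (A : SLO Sig) (v : ℕ → A.carrier) (p : ℕ) (L : List Sig) :
    A.eval v (diaList L (SP.var p)) = dl A L (v p) := by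
  induction L with
  | nil => rfl
  | cons r L ih => simp only [diaList, SLO.eval, dl, ih]

theorem fil_fwd {Sig : Type} (A : SLO Sig) (v : ℕ → Set (SFil A)) (p : ℕ) (L : List Sig) :
    ∀ F : SFil A, (filFrame A).truth v (diaList L (SP.var p)) F →
      ∃ G ∈ v p, ∀ a ∈ G.s, dl A L a ∈ F.s := by
  induction L with
  | nil => intro F h; exact ⟨F, h, fun a ha => ha⟩
  | cons r L ih =>
    rintro F ⟨H, hr, hH⟩
    obtain ⟨G, hG, h⟩ := ih H hH
    exact ⟨G, hG, fun a ha => hr _ (h a ha)⟩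

theorem fil_bwd {Sig : Type} (A : SLO Sig) (v : ℕ → Set (SFil A)) (p : ℕ) (G : SFil A)
    (hG : G ∈ v p) (L : List Sig) :
    ∃ H : SFil A, (filFrame A).truth v (diaList L (SP.var p)) H ∧
      ∀ b ∈ H.s, ∃ a ∈ G.s, dl A L a ≤ b := by
  induction L with
  | nil => exact ⟨G, hG, fun b hb => ⟨b, hb, le_rfl⟩⟩
  | cons r L ih =>
    obtain ⟨H, hH, h⟩ := ih
    refine ⟨H.img r, ⟨H, fun a ha => ⟨a, ha, le_rfl⟩, hH⟩, ?_⟩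
    rintro b ⟨c, hc, hcb⟩
    obtain ⟨a, ha, hac⟩ := h c hc
    exact ⟨a, ha, (A.mono r hac).trans hcb⟩

theorem main_complex {Sig : Type} (Ax : Set (SPImp Sig))
    (hAx : ∀ ι ∈ Ax, ∃ (L M : List Sig) (p : ℕ), M ≠ [] ∧
            ι = (diaList L (SP.var p), diaList M (SP.var p))) : IsComplexLogic Ax := by
  intro A hA
  refine ⟨filFrame A, ?_, fun a => {F : SFil A | a ∈ F.s}, ?_, ?_, ?_, ?_⟩
  · intro ι hι v F hF
    have hv := hA ι hι
    obtain ⟨L, M, p, hM, rfl⟩ := hAx ι hι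
    obtain ⟨G, hG, h⟩ := fil_fwd A v p L F hF
    cases M with
    | nil => exact absurd rfl hM
    | cons r M =>
      obtain ⟨H, hH, h'⟩ := fil_bwd A v p G hG M
      refine ⟨H, fun b hb => ?_, hH⟩
      obtain ⟨a, ha, hab⟩ := h' b hb
      have h2 := hv (fun _ => a)
      simp only [eval_diaList] at h2
      exact F.up _ _ (h a ha) (h2.trans (A.mono r hab))
  · intro a b hab
    have hab : {F : SFil A | a ∈ F.s} = {F : SFil A | b ∈ F.s} := hab
    have h1 : SFil.pr A a ∈ {F : SFil A | b ∈ F.s} := hab ▸ (le_refl a : a ≤ a)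
    have h2 : SFil.pr A b ∈ {F : SFil A | a ∈ F.s} := hab ▸ (le_refl b : b ≤ b)
    exact le_antisymm h1 h2
  · exact Set.eq_univ_of_forall fun F : SFil A => F.top
  · intro a b
    refine Set.ext fun F : SFil A => ?_
    exact ⟨fun h => ⟨F.up _ _ h inf_le_left, F.up _ _ h inf_le_right⟩,
      fun h => F.inf _ _ h.1 h.2⟩
  · intro r a
    refine Set.ext fun F : SFil A => ?_
    constructor
    · intro h
      exact ⟨SFil.pr A a, le_refl a, fun b hb => F.up _ _ h (A.mono r hb)⟩
    · rintro ⟨G, hG, hr⟩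
      exact hr a hG

/-- Any spi-logic axiomatised by sp-implications of the form
`◇_{R₁}⋯◇_{Rₙ} p → ◇_{S₁}⋯◇_{Sₘ} p` (n ≥ 0, m > 0) is complex, and hence complete.
In particular the spi-logic of density `{◇p → ◇◇p}` and the spi-logic of
commutativity are complex and complete. -/
theorem stmt4 :
    (∀ (Sig : Type) (Ax : Set (SPImp Sig)),
        (∀ ι ∈ Ax, ∃ (L M : List Sig) (p : ℕ), M ≠ [] ∧
            ι = (diaList L (SP.var p), diaList M (SP.var p))) →
        IsComplexLogic Ax ∧ IsCompleteLogic Ax) ∧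
    (IsComplexLogic ({e_dense} : Set (SPImp Unit)) ∧
      IsCompleteLogic ({e_dense} : Set (SPImp Unit))) ∧
    (IsComplexLogic commAx ∧ IsCompleteLogic commAx) := by
  have key : ∀ (Sig : Type) (Ax : Set (SPImp Sig)),
        (∀ ι ∈ Ax, ∃ (L M : List Sig) (p : ℕ), M ≠ [] ∧
            ι = (diaList L (SP.var p), diaList M (SP.var p))) →
        IsComplexLogic Ax ∧ IsCompleteLogic Ax := fun Sig Ax h =>
    ⟨main_complex Ax h, complete_of_complex (main_complex Ax h)⟩
  refine ⟨key, key _ _ ?_, key _ _ ?_⟩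
  · rintro ι rfl
    exact ⟨[()], [(), ()], 0, by simp, rfl⟩
  · rintro ι (rfl | rfl)
    · exact ⟨[true, false], [false, true], 0, by simp, rfl⟩
    · exact ⟨[false, true], [true, false], 0, by simp, rfl⟩
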